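/- Let K be a kernel of hyperbolic type on a set X that separates points, i.e., K(x,y) > 1 whenever x ≠ y. Then for every t ∈ (0,1), the pointwise power K^t is strictly of hyperbolic type: K^t is a kernel of hyperbolic type, and for every x₀ ∈ X, all pairwise distinct points x₁,…,xₙ ∈ X \ {x₀}, and every nonzero λ ∈ ℝⁿ, one has ∑_{i,j=1}^n λᵢλⱼ (K^t(x₀,xᵢ)·K^t(x₀,xⱼ) − K^t(xᵢ,xⱼ)) > 0. -/

import Mathlib

/-- A kernel of hyperbolic type on a set `X`: symmetric, nonnegative, with diagonal `1`,
satisfying the hyperbolic Cauchy–Schwarz inequalities. -/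
def IsHypKernel {X : Type*} (K : X → X → ℝ) : Prop :=
  (∀ x y, K x y = K y x) ∧ (∀ x y, 0 ≤ K x y) ∧ (∀ x, K x x = 1) ∧
  ∀ (n : ℕ) (x₀ : X) (x : Fin n → X) (lam : Fin n → ℝ),
    (∑ i, ∑ j, lam i * lam j * K (x i) (x j)) ≤ (∑ k, lam k * K x₀ (x k)) ^ 2

/-!
Fix a base point `x₀` and write `a i = K x₀ (x i)`. The matrix
`M i j = 1 - K (x i) (x j) / (a i * a j)` is the visual kernel rescaled, hence positive
semidefinite, and its entries lie in `(-1, 1)`; rescaling `1 - (1 - M i j) ^ t` by `a i ^ t` gives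
the visual kernel of `K ^ t`. For `0 < t < 1` the function `1 - (1 - s) ^ t` is a power series in
`s` whose nonconstant coefficients are positive, so the Schur product theorem makes the new matrix
positive semidefinite. A null vector `u` of it is annihilated by every entrywise power
`M i j ^ k`, `k ≥ 1`, hence by `p (M i j)` for every polynomial `p` without constant term. If `i`
maximizes `M i i` on the support of `u`, separation of points makes `M i i` different from the
other `M i j`, so some `p` isolates the coordinate `u i`, which must then vanish.
-/

section BinomialCoefficients

/-- The Taylor coefficients at `0` of `s ↦ 1 - (1 - s) ^ t`. -/
noncomputable def oneSubRpowCoeff (t : ℝ) : ℕ → ℝ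
  | 0 => 0
  | k + 1 => (-1) ^ k * Ring.choose t (k + 1)

theorem hasSum_oneSubRpowCoeff (t : ℝ) {s : ℝ} (hs : |s| < 1) :
    HasSum (fun k => oneSubRpowCoeff t k * s ^ k) (1 - (1 - s) ^ t) := by
  have hbinom : HasSum (fun k => Ring.choose t k * (-s) ^ k) ((1 - s) ^ t) := by
    simpa [binomialSeries, mul_comm, ← sub_eq_add_neg] using
      (Real.one_add_rpow_hasFPowerSeriesOnBall_zero (a := t)).hasSum (y := -s)
        (by simpa [enorm_eq_nnnorm, ← NNReal.coe_lt_coe] using hs)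
  have htail := ((hasSum_nat_add_iff' 1).2 hbinom).neg
  rw [← hasSum_nat_add_iff' 1]
  convert htail using 1
  · funext k
    simp only [oneSubRpowCoeff, neg_pow s]
    ring
  · simp [oneSubRpowCoeff]

theorem oneSubRpowCoeff_one (t : ℝ) : oneSubRpowCoeff t 1 = t := by
  simp [oneSubRpowCoeff]

theorem oneSubRpowCoeff_succ_succ (t : ℝ) (k : ℕ) :
    oneSubRpowCoeff t (k + 2) = oneSubRpowCoeff t (k + 1) * ((k + 1 - t) / (k + 2)) := by
  have hchoose := Ring.choose_smul_choose t (Nat.le_succ (k + 1))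
  simp only [Nat.succ_eq_add_one, Nat.choose_succ_self_right, nsmul_eq_mul,
    Nat.add_sub_cancel_left, Ring.choose_one_right] at hchoose
  push_cast at hchoose
  rw [← mul_div_assoc, eq_div_iff (by positivity)]
  simp only [oneSubRpowCoeff, pow_succ]
  linear_combination (-(-1) ^ k) * hchoose

theorem oneSubRpowCoeff_nonneg {t : ℝ} (ht : t ∈ Set.Icc (0 : ℝ) 1) :
    ∀ k, 0 ≤ oneSubRpowCoeff t k
  | 0 => le_rfl
  | 1 => (oneSubRpowCoeff_one t).symm ▸ ht.1
  | k + 2 => by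
    have hfactor : 0 ≤ k + 1 - t := by linarith [ht.2, k.cast_nonneg (α := ℝ)]
    rw [oneSubRpowCoeff_succ_succ]
    exact mul_nonneg (oneSubRpowCoeff_nonneg ht (k + 1)) (by positivity)

theorem oneSubRpowCoeff_succ_pos {t : ℝ} (ht : t ∈ Set.Ioo (0 : ℝ) 1) :
    ∀ k, 0 < oneSubRpowCoeff t (k + 1)
  | 0 => (oneSubRpowCoeff_one t).symm ▸ ht.1
  | k + 1 => by
    have hfactor : 0 < k + 1 - t := by linarith [ht.2, k.cast_nonneg (α := ℝ)]
    rw [oneSubRpowCoeff_succ_succ]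
    exact mul_pos (oneSubRpowCoeff_succ_pos ht k) (by positivity)

end BinomialCoefficients

section PowerSums

open Finset Polynomial

variable {ι R : Type*} [CommRing R] {s : Finset ι} {a w : ι → R}

theorem sum_eval_mul_eq_zero_of_forall_sum_pow_mul_eq_zero
    (h : ∀ k : ℕ, ∑ j ∈ s, a j ^ k * w j = 0) (p : R[X]) :
    ∑ j ∈ s, p.eval (a j) * w j = 0 := by
  induction p using Polynomial.induction_on' with
  | add p q hp hq => simp only [eval_add, add_mul, sum_add_distrib, hp, hq, add_zero]
  | monomial k b => simp only [eval_monomial, mul_assoc, ← mul_sum, h k, mul_zero]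

theorem eq_zero_of_forall_sum_pow_mul_eq_zero [IsDomain R]
    (h : ∀ k : ℕ, ∑ j ∈ s, a j ^ k * w j = 0) {i : ι} (hi : i ∈ s)
    (hne : ∀ j ∈ s, j ≠ i → w j ≠ 0 → a j ≠ a i) : w i = 0 := by
  classical
  let p : R[X] := ∏ j ∈ s with j ≠ i ∧ w j ≠ 0, (X - C (a j))
  have hp_self : p.eval (a i) ≠ 0 := by
    simp only [p, eval_prod, eval_sub, eval_X, eval_C, prod_ne_zero_iff, mem_filter, sub_ne_zero]
    exact fun j ⟨hj, hji, hwj⟩ => (hne j hj hji hwj).symm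
  have hp_other : ∀ j ∈ s, j ≠ i → p.eval (a j) * w j = 0 := fun j hj hji => by
    by_cases hwj : w j = 0
    · rw [hwj, mul_zero]
    · rw [eval_prod, prod_eq_zero (mem_filter.2 ⟨hj, hji, hwj⟩) (by simp), zero_mul]
  have hsum := sum_eval_mul_eq_zero_of_forall_sum_pow_mul_eq_zero h p
  rw [sum_eq_single_of_mem i hi hp_other] at hsum
  exact (mul_eq_zero.1 hsum).resolve_left hp_self

end PowerSums

section EntrywisePowers

open Finset Matrix

variable {ι : Type*} [Fintype ι]

theorem dotProduct_mulVec_self_eq_sum {R : Type*} [CommSemiring R] (M : Matrix ι ι R) (u : ι → R) :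
    u ⬝ᵥ M *ᵥ u = ∑ i, ∑ j, u i * u j * M i j := by
  rw [dot_mulVec_eq_sum_sum, sum_comm]
  simp only [mul_right_comm]

theorem hasSum_dotProduct_map_mulVec {R : Type*} [CommSemiring R] [TopologicalSpace R]
    [IsTopologicalSemiring R] {M : Matrix ι ι R} {c : ℕ → R} {f : R → R}
    (hf : ∀ i j, HasSum (fun k => c k * M i j ^ k) (f (M i j))) (u : ι → R) :
    HasSum (fun k => c k * (u ⬝ᵥ M.map (· ^ k) *ᵥ u)) (u ⬝ᵥ M.map f *ᵥ u) := by
  simp only [dotProduct_mulVec_self_eq_sum, map_apply, mul_sum, mul_left_comm (c _)]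
  exact hasSum_sum fun i _ => hasSum_sum fun j _ => (hf i j).mul_left _

theorem eq_zero_of_forall_map_pow_mulVec_eq_zero {R : Type*} [CommRing R] [IsDomain R]
    [LinearOrder R] {M : Matrix ι ι R} (hdiag : ∀ i, M i i ≠ 0)
    (hoff : Pairwise fun i j => M i j < max (M i i) (M j j)) {u : ι → R}
    (hu : ∀ k : ℕ, M.map (· ^ (k + 1)) *ᵥ u = 0) : u = 0 := by
  classical
  by_contra hne
  obtain ⟨i₀, hi₀⟩ := Function.ne_iff.1 hne
  obtain ⟨i, hi, hmax⟩ := exists_max_image (univ.filter (u · ≠ 0)) (fun j => M j j)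
    ⟨i₀, mem_filter.2 ⟨mem_univ _, hi₀⟩⟩
  have hpow : ∀ k : ℕ, ∑ j, M i j ^ k * (M i j * u j) = 0 := fun k => by
    simpa [mulVec, dotProduct, pow_succ, mul_assoc] using congrFun (hu k) i
  have hrow : ∀ j, j ≠ i → M i j * u j ≠ 0 → M i j ≠ M i i := fun j hji huj => by
    have hle : M j j ≤ M i i := hmax j (mem_filter.2 ⟨mem_univ _, right_ne_zero_of_mul huj⟩)
    exact ((hoff hji.symm).trans_eq (max_eq_left hle)).ne
  have hzero := eq_zero_of_forall_sum_pow_mul_eq_zero hpow (mem_univ i) fun j _ => hrow j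
  exact mul_ne_zero (hdiag i) (mem_filter.1 hi).2 hzero

end EntrywisePowers

section EntrywisePowerSeries

open Matrix
open scoped ComplexOrder

variable {ι : Type*} [Finite ι]

theorem posSemidef_map_pow {𝕜 : Type*} [RCLike 𝕜] {M : Matrix ι ι 𝕜} (hM : M.PosSemidef) (k : ℕ) :
    (M.map (· ^ k)).PosSemidef := by
  induction k with
  | zero =>
    convert posSemidef_vecMulVec_self_star (1 : ι → 𝕜)
    ext
    simp [vecMulVec_apply]
  | succ k ih =>
    convert ih.hadamard hM
    ext
    simp [pow_succ]

variable {M : Matrix ι ι ℝ} {c : ℕ → ℝ} {f : ℝ → ℝ}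

theorem posSemidef_map_of_hasSum_pow (hM : M.PosSemidef) (hc : ∀ k, 0 ≤ c k)
    (hf : ∀ i j, HasSum (fun k => c k * M i j ^ k) (f (M i j))) : (M.map f).PosSemidef := by
  cases nonempty_fintype ι
  refine .of_dotProduct_mulVec_nonneg (hM.isHermitian.map f fun _ => rfl) fun u => ?_
  exact (hasSum_dotProduct_map_mulVec hf u).nonneg fun k =>
    mul_nonneg (hc k) ((posSemidef_map_pow hM k).dotProduct_mulVec_nonneg u)

theorem posDef_map_of_hasSum_pow (hM : M.PosSemidef) (hdiag : ∀ i, M i i ≠ 0)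
    (hoff : Pairwise fun i j => M i j < max (M i i) (M j j))
    (hc₀ : 0 ≤ c 0) (hc : ∀ k, 0 < c (k + 1))
    (hf : ∀ i j, HasSum (fun k => c k * M i j ^ k) (f (M i j))) : (M.map f).PosDef := by
  cases nonempty_fintype ι
  have hc_nonneg : ∀ k, 0 ≤ c k := Nat.rec hc₀ fun k _ => (hc k).le
  have hfM := posSemidef_map_of_hasSum_pow hM hc_nonneg hf
  refine .of_dotProduct_mulVec_pos hfM.isHermitian fun u hu =>
    (hfM.dotProduct_mulVec_nonneg u).lt_of_ne' fun hnull => hu ?_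
  refine eq_zero_of_forall_map_pow_mulVec_eq_zero hdiag hoff fun k => ?_
  have hterm_nonneg : ∀ k, 0 ≤ c k * (u ⬝ᵥ M.map (· ^ k) *ᵥ u) := fun k =>
    mul_nonneg (hc_nonneg k) ((posSemidef_map_pow hM k).dotProduct_mulVec_nonneg u)
  have hterms := (hasSum_zero_iff_of_nonneg hterm_nonneg).1
    (hnull ▸ hasSum_dotProduct_map_mulVec hf u)
  exact ((posSemidef_map_pow hM (k + 1)).dotProduct_mulVec_zero_iff u).1
    ((mul_eq_zero.1 (congrFun hterms (k + 1))).resolve_left (hc k).ne')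

end EntrywisePowerSeries

section DiagonalCongruence

open Matrix

variable {ι : Type*} [Fintype ι] [DecidableEq ι] {A : Matrix ι ι ℝ} {d : ι → ℝ}

theorem posSemidef_diagonal_mul_mul_diagonal_iff (hd : ∀ i, d i ≠ 0) :
    (diagonal d * A * diagonal d).PosSemidef ↔ A.PosSemidef := by
  have hunit : IsUnit (diagonal d) := isUnit_diagonal.2 (Pi.isUnit_iff.2 fun i => (hd i).isUnit)
  simpa [star_eq_conjTranspose] using hunit.posSemidef_star_left_conjugate_iff (x := A)

theorem posDef_diagonal_mul_mul_diagonal_iff (hd : ∀ i, d i ≠ 0) :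
    (diagonal d * A * diagonal d).PosDef ↔ A.PosDef := by
  have hunit : IsUnit (diagonal d) := isUnit_diagonal.2 (Pi.isUnit_iff.2 fun i => (hd i).isUnit)
  simpa [star_eq_conjTranspose] using hunit.posDef_star_left_conjugate_iff (x := A)

end DiagonalCongruence

section VisualMatrix

open Finset Matrix

variable {X ι : Type*}

/-- The matrix of the visual kernel of `K` at `x₀` on a family of points. -/
def visualMatrix (K : X → X → ℝ) (x₀ : X) (x : ι → X) : Matrix ι ι ℝ :=
  of fun i j => K x₀ (x i) * K x₀ (x j) - K (x i) (x j)

/-- The visual matrix of `K` at `x₀` rescaled by `K x₀ (x i)`. When `K = cosh d` on hyperbolic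
space, this is the Gram matrix of the points in the Klein ball model centred at `x₀`. -/
noncomputable def kleinGram (K : X → X → ℝ) (x₀ : X) (x : ι → X) : Matrix ι ι ℝ :=
  of fun i j => 1 - K (x i) (x j) / (K x₀ (x i) * K x₀ (x j))

variable {K : X → X → ℝ} {x₀ : X} {x : ι → X} [Fintype ι]

theorem dotProduct_visualMatrix_mulVec (u : ι → ℝ) :
    u ⬝ᵥ visualMatrix K x₀ x *ᵥ u =
      (∑ k, u k * K x₀ (x k)) ^ 2 - ∑ i, ∑ j, u i * u j * K (x i) (x j) := by
  simp only [dotProduct_mulVec_self_eq_sum, visualMatrix, of_apply, sq, sum_mul_sum, mul_sub,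
    sum_sub_distrib, mul_mul_mul_comm]

theorem posSemidef_visualMatrix_iff (hsymm : ∀ x y, K x y = K y x) :
    (visualMatrix K x₀ x).PosSemidef ↔
      ∀ u : ι → ℝ, ∑ i, ∑ j, u i * u j * K (x i) (x j) ≤ (∑ k, u k * K x₀ (x k)) ^ 2 := by
  have hherm : (visualMatrix K x₀ x).IsHermitian := by
    ext i j
    simp [visualMatrix, hsymm (x j), mul_comm]
  simp only [posSemidef_iff_dotProduct_mulVec, hherm, true_and, star_trivial,
    dotProduct_visualMatrix_mulVec, sub_nonneg]

variable [DecidableEq ι]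

theorem visualMatrix_eq_diagonal_mul_kleinGram_mul_diagonal (hK : ∀ i, K x₀ (x i) ≠ 0) :
    visualMatrix K x₀ x =
      diagonal (fun i => K x₀ (x i)) * kleinGram K x₀ x * diagonal (fun i => K x₀ (x i)) := by
  ext i j
  have hi := hK i
  have hj := hK j
  simp only [visualMatrix, kleinGram, of_apply, mul_diagonal, diagonal_mul]
  field_simp

theorem visualMatrix_rpow_eq_diagonal_mul_kleinGram_map_mul_diagonal (hK : ∀ x y, 0 < K x y)
    (t : ℝ) :
    visualMatrix (fun x y => K x y ^ t) x₀ x =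
      diagonal (fun i => K x₀ (x i) ^ t) * (kleinGram K x₀ x).map (fun s => 1 - (1 - s) ^ t) *
        diagonal (fun i => K x₀ (x i) ^ t) := by
  ext i j
  have hi := hK x₀ (x i)
  have hj := hK x₀ (x j)
  simp only [visualMatrix, kleinGram, of_apply, mul_diagonal, diagonal_mul, map_apply,
    sub_sub_cancel, Real.div_rpow (hK _ _).le (mul_pos hi hj).le, Real.mul_rpow hi.le hj.le]
  field_simp

end VisualMatrix

namespace IsHypKernel

variable {X ι : Type*} {K : X → X → ℝ} {x₀ : X} {x : ι → X}

theorem one_le (hK : IsHypKernel K) (x y : X) : 1 ≤ K x y := by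
  have hcs : K y y ≤ K x y ^ 2 := by simpa using hK.2.2.2 1 x ![y] ![1]
  rw [hK.2.2.1] at hcs
  exact (one_le_sq_iff₀ (hK.2.1 x y)).1 hcs

theorem pos (hK : IsHypKernel K) (x y : X) : 0 < K x y :=
  one_pos.trans_le (hK.one_le x y)

theorem lt_two_mul_mul (hK : IsHypKernel K) (x₀ x y : X) : K x y < 2 * (K x₀ x * K x₀ y) := by
  have hcs := hK.2.2.2 2 x₀ ![x, y] ![K x₀ y, K x₀ x]
  simp only [Fin.sum_univ_two, Matrix.cons_val_zero, Matrix.cons_val_one, hK.2.2.1,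
    hK.1 y x] at hcs
  nlinarith [hK.pos x₀ x, hK.pos x₀ y, mul_pos (hK.pos x₀ x) (hK.pos x₀ y)]

theorem posSemidef_visualMatrix [Finite ι] (hK : IsHypKernel K) (x₀ : X) (x : ι → X) :
    (visualMatrix K x₀ x).PosSemidef :=
  (Matrix.posSemidef_submatrix_equiv (Finite.equivFin ι).symm).1 <|
    (posSemidef_visualMatrix_iff hK.1).2 <| hK.2.2.2 _ x₀ (x ∘ (Finite.equivFin ι).symm)

theorem posSemidef_kleinGram [Finite ι] (hK : IsHypKernel K) (x₀ : X) (x : ι → X) :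
    (kleinGram K x₀ x).PosSemidef := by
  classical
  cases nonempty_fintype ι
  have hne : ∀ i, K x₀ (x i) ≠ 0 := fun i => (hK.pos _ _).ne'
  rw [← posSemidef_diagonal_mul_mul_diagonal_iff hne,
    ← visualMatrix_eq_diagonal_mul_kleinGram_mul_diagonal hne]
  exact hK.posSemidef_visualMatrix x₀ x

theorem abs_kleinGram_lt_one (hK : IsHypKernel K) (x₀ : X) (x : ι → X) (i j : ι) :
    |kleinGram K x₀ x i j| < 1 := by
  have hden : 0 < K x₀ (x i) * K x₀ (x j) := mul_pos (hK.pos _ _) (hK.pos _ _)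
  have hratio_pos := div_pos (hK.pos (x i) (x j)) hden
  have hratio_lt := (div_lt_iff₀ hden).2 (hK.lt_two_mul_mul x₀ (x i) (x j))
  simp only [kleinGram, Matrix.of_apply, abs_lt]
  constructor <;> linarith

theorem hasSum_kleinGram (hK : IsHypKernel K) (x₀ : X) (x : ι → X) (t : ℝ) (i j : ι) :
    HasSum (fun k => oneSubRpowCoeff t k * kleinGram K x₀ x i j ^ k)
      (1 - (1 - kleinGram K x₀ x i j) ^ t) :=
  hasSum_oneSubRpowCoeff t (hK.abs_kleinGram_lt_one x₀ x i j)

theorem kleinGram_self_pos (hK : IsHypKernel K) {i : ι} (hi : 1 < K x₀ (x i)) :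
    0 < kleinGram K x₀ x i i := by
  rw [kleinGram, Matrix.of_apply, hK.2.2.1, sub_pos]
  have hsq := one_lt_mul_of_lt_of_le hi hi.le
  exact (div_lt_one (one_pos.trans hsq)).2 hsq

theorem kleinGram_lt_max (hK : IsHypKernel K) {i j : ι} (hij : 1 < K (x i) (x j)) :
    kleinGram K x₀ x i j < max (kleinGram K x₀ x i i) (kleinGram K x₀ x j j) := by
  have inv_sq_lt {a b : ℝ} (hb : 0 < b) (hba : b ≤ a) :
      1 / (a * a) < K (x i) (x j) / (a * b) := by
    have ha := hb.trans_le hba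
    calc 1 / (a * a) ≤ 1 / (a * b) := by gcongr
      _ < K (x i) (x j) / (a * b) := by gcongr
  simp only [kleinGram, Matrix.of_apply, hK.2.2.1, lt_max_iff, sub_lt_sub_iff_left]
  rcases le_total (K x₀ (x j)) (K x₀ (x i)) with hle | hle
  · exact .inl (inv_sq_lt (hK.pos _ _) hle)
  · exact .inr (mul_comm (K x₀ (x i)) _ ▸ inv_sq_lt (hK.pos _ _) hle)

theorem rpow (hK : IsHypKernel K) {t : ℝ} (ht : t ∈ Set.Icc (0 : ℝ) 1) :
    IsHypKernel fun x y => K x y ^ t := by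
  have hsymm : ∀ x y, K x y ^ t = K y x ^ t := fun x y => by rw [hK.1]
  refine ⟨hsymm, fun x y => Real.rpow_nonneg (hK.2.1 x y) t,
    fun x => by simp only [hK.2.2.1, Real.one_rpow],
    fun n x₀ x => (posSemidef_visualMatrix_iff hsymm).1 ?_⟩
  rw [visualMatrix_rpow_eq_diagonal_mul_kleinGram_map_mul_diagonal hK.pos,
    posSemidef_diagonal_mul_mul_diagonal_iff fun i => (Real.rpow_pos_of_pos (hK.pos _ _) t).ne']
  exact posSemidef_map_of_hasSum_pow (hK.posSemidef_kleinGram x₀ x)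
    (oneSubRpowCoeff_nonneg ht) (hK.hasSum_kleinGram x₀ x t)

theorem posDef_visualMatrix_rpow [Finite ι] (hK : IsHypKernel K) {t : ℝ}
    (ht : t ∈ Set.Ioo (0 : ℝ) 1) (hx₀ : ∀ i, 1 < K x₀ (x i))
    (hx : Pairwise fun i j => 1 < K (x i) (x j)) :
    (visualMatrix (fun x y => K x y ^ t) x₀ x).PosDef := by
  classical
  cases nonempty_fintype ι
  rw [visualMatrix_rpow_eq_diagonal_mul_kleinGram_map_mul_diagonal hK.pos,
    posDef_diagonal_mul_mul_diagonal_iff fun i => (Real.rpow_pos_of_pos (hK.pos _ _) t).ne']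
  exact posDef_map_of_hasSum_pow (hK.posSemidef_kleinGram x₀ x)
    (fun i => (hK.kleinGram_self_pos (hx₀ i)).ne') (fun _ _ hij => hK.kleinGram_lt_max (hx hij))
    le_rfl (oneSubRpowCoeff_succ_pos ht) (hK.hasSum_kleinGram x₀ x t)

end IsHypKernel

/-- If `K` is a kernel of hyperbolic type separating points (`K(x,y) > 1` for `x ≠ y`),
then for `t ∈ (0,1)` the power `K^t` is strictly of hyperbolic type: it is of hyperbolic
type, and each visual kernel `K^t(x₀,x)·K^t(x₀,y) − K^t(x,y)` is strictly of positive type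
on `X \ {x₀}`. -/
theorem pow_strictly_hyperbolic_of_separating {X : Type*} (K : X → X → ℝ)
    (hK : IsHypKernel K) (hsep : ∀ x y : X, x ≠ y → 1 < K x y)
    (t : ℝ) (ht : t ∈ Set.Ioo (0 : ℝ) 1) :
    IsHypKernel (fun x y => K x y ^ t) ∧
    ∀ (x₀ : X) (n : ℕ) (x : Fin n → X), Function.Injective x → (∀ i, x i ≠ x₀) →
      ∀ lam : Fin n → ℝ, lam ≠ 0 →
        0 < ∑ i, ∑ j, lam i * lam j *
          (K x₀ (x i) ^ t * K x₀ (x j) ^ t - K (x i) (x j) ^ t) := by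
  refine ⟨hK.rpow ⟨ht.1.le, ht.2.le⟩, fun x₀ n x hx hx₀ lam hlam => ?_⟩
  have hposDef := hK.posDef_visualMatrix_rpow ht (fun i => hsep x₀ (x i) (hx₀ i).symm)
    fun i j hij => hsep (x i) (x j) (hx.ne hij)
  have hform := hposDef.dotProduct_mulVec_pos hlam
  rwa [star_trivial, dotProduct_mulVec_self_eq_sum] at hform
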